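/- arXiv:2304.08311 — 2 statements merged into one kernel-verified Lean document; each statement's English description precedes it below -/
import Mathlib

section
/- Let ρ > 0, χ = −π/2 (so cosχ = 0, sinχ = −1), and K = 0. Then for every choice of signs ε₁, ε₃ ∈ {+1,−1}, the quadruple (x₁, x₂, x₃, λ) with x₁ = ε₁√(2(ρ+2)/(5+3ρ)), x₂ = 0, x₃ = ε₃√((ρ+1)/(5+3ρ)), and λ = −(ρ+1)x₃ solves the equilibrium system: ρcosχ·x₂x₃ − 2Kx₁x₂ + (ρsinχ−1)x₁x₃ = λx₁; ρcosχ·x₁x₃ − K(x₁²−x₂²) − (ρsinχ+1)x₂x₃ = λx₂; ρcosχ·x₁x₂ − (x₂²−x₃²) + (1/2)(ρsinχ−1)(x₁²−x₂²) = λx₃; x₁²+x₂²+x₃² = 1. -/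
open Real

/-- The equilibrium system for the oriented octupolar potential with
parameters `(ρ, χ, K)`, unknowns `(x₁, x₂, x₃)` and Lagrange multiplier `lam`. -/
def EqSys (ρ χ K x₁ x₂ x₃ lam : ℝ) : Prop :=
  ρ * Real.cos χ * x₂ * x₃ - 2 * K * x₁ * x₂ + (ρ * Real.sin χ - 1) * x₁ * x₃ = lam * x₁ ∧
  ρ * Real.cos χ * x₁ * x₃ - K * (x₁ ^ 2 - x₂ ^ 2) - (ρ * Real.sin χ + 1) * x₂ * x₃ = lam * x₂ ∧
  ρ * Real.cos χ * x₁ * x₂ - (x₂ ^ 2 - x₃ ^ 2)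
      + (1 / 2) * (ρ * Real.sin χ - 1) * (x₁ ^ 2 - x₂ ^ 2) = lam * x₃ ∧
  x₁ ^ 2 + x₂ ^ 2 + x₃ ^ 2 = 1

theorem stmt9 (ρ : ℝ) (hρ : 0 < ρ) (ε₁ ε₃ : ℝ)
    (h1 : ε₁ = 1 ∨ ε₁ = -1) (h3 : ε₃ = 1 ∨ ε₃ = -1) :
    EqSys ρ (-(π / 2)) 0
      (ε₁ * Real.sqrt (2 * (ρ + 2) / (5 + 3 * ρ)))
      0
      (ε₃ * Real.sqrt ((ρ + 1) / (5 + 3 * ρ)))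
      (-(ρ + 1) * (ε₃ * Real.sqrt ((ρ + 1) / (5 + 3 * ρ)))) := by
  have hD : (0:ℝ) < 5 + 3 * ρ := by linarith
  have e1 : ε₁ ^ 2 = 1 := by rcases h1 with h | h <;> rw [h] <;> norm_num
  have e3 : ε₃ ^ 2 = 1 := by rcases h3 with h | h <;> rw [h] <;> norm_num
  have s1 : (ε₁ * Real.sqrt (2 * (ρ + 2) / (5 + 3 * ρ))) ^ 2 = 2 * (ρ + 2) / (5 + 3 * ρ) := by
    rw [mul_pow, e1, Real.sq_sqrt (by positivity), one_mul]
  have s3 : (ε₃ * Real.sqrt ((ρ + 1) / (5 + 3 * ρ))) ^ 2 = (ρ + 1) / (5 + 3 * ρ) := by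
    rw [mul_pow, e3, Real.sq_sqrt (by positivity), one_mul]
  generalize ε₁ * Real.sqrt (2 * (ρ + 2) / (5 + 3 * ρ)) = x at *
  generalize ε₃ * Real.sqrt ((ρ + 1) / (5 + 3 * ρ)) = z at *
  unfold EqSys
  rw [Real.cos_neg, Real.sin_neg, Real.cos_pi_div_two, Real.sin_pi_div_two]
  refine ⟨by ring, by ring, ?_, ?_⟩
  · have h : (ρ + 2) * z ^ 2 = (ρ + 1) / 2 * x ^ 2 := by
      rw [s1, s3]; field_simp
    linear_combination h
  · rw [s1, s3]; field_simp; ring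
end

section
/- Fix ρ with 0 < ρ < 2 and χ with −π/2 < χ < −π/6. Then there exists K₀ > 0 such that for every K > K₀, the oriented octupolar potential Φₒ(x₁,x₂,x₃) = 3ρcosχ·x₁x₂x₃ + K(x₂²−3x₁²)x₂ + (x₃²−3x₂²)x₃ + (3/2)(ρsinχ−1)(x₁²−x₂²)x₃ has exactly 14 critical points on the unit sphere S², i.e., the set {x ∈ ℝ³ : x₁²+x₂²+x₃² = 1 and ∇Φₒ(x) is a scalar multiple of x} has exactly 14 elements. -/
open Real

/-- The oriented octupolar potential with parameters `(ρ, χ, K)` as a function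
on three-dimensional Euclidean space. -/
noncomputable def orientedPot (ρ χ K : ℝ) (x : EuclideanSpace ℝ (Fin 3)) : ℝ :=
  3 * ρ * Real.cos χ * x 0 * x 1 * x 2
    + K * ((x 1) ^ 2 - 3 * (x 0) ^ 2) * x 1
    + ((x 2) ^ 2 - 3 * (x 1) ^ 2) * x 2
    + (3 / 2) * (ρ * Real.sin χ - 1) * ((x 0) ^ 2 - (x 1) ^ 2) * x 2

section Helpers
open Filter Topology

/-- `A`, the cubic `x³ - 3xy²` on `y = 1`. -/
def cA (s : ℝ) : ℝ := s ^ 3 - 3 * s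
def cB (a b s : ℝ) : ℝ := 2 * (s ^ 3 - 3 * s) - (b * s - a) * (s ^ 2 + 1)
def cH (a b s : ℝ) : ℝ := a * (s ^ 2 - 1) - 2 * b * s
def cG (a b s : ℝ) : ℝ := 2 * a * s + b * (s ^ 2 - 1) - (s ^ 2 + 1)
/-- The sextic governing the directions of the critical points, with `e = 1/(2K²)`. -/
def cP (a b e s : ℝ) : ℝ := cA s * cB a b s + e * (cH a b s ^ 2 * cG a b s)

lemma cP_cont (a b e : ℝ) : Continuous (cP a b e) := by
  unfold cP cA cB cH cG; fun_prop

lemma cB_cont (a b : ℝ) : Continuous (cB a b) := by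
  unfold cB; fun_prop

lemma eps_tendsto : Tendsto (fun K : ℝ => 1 / (2 * K ^ 2)) atTop (𝓝 0) := by
  have : Tendsto (fun K : ℝ => 2 * K ^ 2) atTop atTop :=
    (tendsto_pow_atTop (by norm_num)).const_mul_atTop (by norm_num)
  simp only [one_div]
  exact this.inv_tendsto_atTop

lemma ev_pos (u v : ℝ) (hu : 0 < u) : ∀ᶠ K : ℝ in atTop, 0 < u + 1 / (2 * K ^ 2) * v := by
  have h : Tendsto (fun K : ℝ => u + 1 / (2 * K ^ 2) * v) atTop (𝓝 (u + 0 * v)) :=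
    tendsto_const_nhds.add (eps_tendsto.mul_const v)
  exact h.eventually (lt_mem_nhds (by simpa using hu))

lemma ev_neg (u v : ℝ) (hu : u < 0) : ∀ᶠ K : ℝ in atTop, u + 1 / (2 * K ^ 2) * v < 0 := by
  filter_upwards [ev_pos (-u) (-v) (by linarith)] with K hK
  nlinarith

lemma card_roots_le (a b e : ℝ) (s₀ : ℝ) (h₀ : cP a b e s₀ ≠ 0) :
    ∃ R : Finset ℝ, R.card ≤ 6 ∧ ∀ s, s ∈ R ↔ cP a b e s = 0 := by
  open Polynomial in
  let p : ℝ[X] := (X ^ 3 - C 3 * X) * (C 2 * (X ^ 3 - C 3 * X) - (C b * X - C a) * (X ^ 2 + C 1))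
    + C e * ((C a * (X ^ 2 - C 1) - C 2 * C b * X) ^ 2 *
      (C 2 * C a * X + C b * (X ^ 2 - C 1) - (X ^ 2 + C 1)))
  have hev : ∀ s, p.eval s = cP a b e s := by
    intro s; simp [p, cP, cA, cB, cH, cG]
  have hp : p ≠ 0 := by
    intro h; apply h₀; rw [← hev, h]; simp
  have hd : p.natDegree ≤ 6 := by
    simp only [p]
    compute_degree
  classical
  refine ⟨p.roots.toFinset, ?_, ?_⟩
  · exact (Multiset.toFinset_card_le _).trans ((Polynomial.card_roots' p).trans hd)
  · intro s
    simp [hp, hev]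

lemma ivt_root {f : ℝ → ℝ} (hf : Continuous f) {x y : ℝ} (hxy : x < y) (h : f x * f y < 0) :
    ∃ s, x < s ∧ s < y ∧ f s = 0 := by
  rcases mul_neg_iff.1 h with ⟨h1, h2⟩ | ⟨h1, h2⟩
  · obtain ⟨s, hs, h0⟩ := intermediate_value_Ioo' hxy.le hf.continuousOn ⟨h2, h1⟩
    exact ⟨s, hs.1, hs.2, h0⟩
  · obtain ⟨s, hs, h0⟩ := intermediate_value_Ioo hxy.le hf.continuousOn ⟨h1, h2⟩
    exact ⟨s, hs.1, hs.2, h0⟩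

lemma ev_roots (a b : ℝ) (ha : 0 < a) (hb : b < 0) (hab : a + √3 * b < 0)
    (hr : a ^ 2 + b ^ 2 < 4) :
    ∀ᶠ K : ℝ in atTop, ∃ R : Finset ℝ, R.card = 6 ∧ ∀ s, s ∈ R ↔ cP a b (1 / (2 * K ^ 2)) s = 0 := by
  set r := √3 with hr3
  have hrr : r ^ 2 = 3 := by rw [hr3]; norm_num
  have hr0 : 0 < r := by rw [hr3]; positivity
  have hr2 : r < 2 := by nlinarith
  have hr1 : 1 < r := by nlinarith
  have hr3 : r ^ 3 = 3 * r := by rw [pow_succ, hrr]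
  -- test points
  have t0 : 0 < cA (-2) * cB a b (-2) := by
    have : cB a b (-2) < 0 := by unfold cB; nlinarith
    have : cA (-2) < 0 := by unfold cA; norm_num
    exact mul_pos_of_neg_of_neg ‹_› ‹_›
  have t6 : 0 < cA 2 * cB a b 2 := by
    have : 0 < cB a b 2 := by unfold cB; nlinarith
    have : 0 < cA 2 := by unfold cA; norm_num
    positivity
  have t2 : 0 < cA (-(r / 3)) * cB a b (-(r / 3)) := by
    have h1 : cA (-(r / 3)) = 8 / 9 * r := by
      unfold cA; linear_combination (-1 / 27) * hr3
    have h2 : cB a b (-(r / 3)) = 16 / 9 * r + (b * r / 3 + a) * (4 / 3) := by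
      unfold cB; linear_combination (-2 / 27) * hr3 + (b * r / 3 + a) / 9 * hrr
    have h3 : (-(b + r * a)) < 4 := by
      apply lt_of_pow_lt_pow_left₀ 2 (by norm_num)
      nlinarith [sq_nonneg (a - r * b)]
    rw [h1, h2]
    have : 0 < (4 + b + r * a) * r := mul_pos (by linarith) hr0
    apply mul_pos (by positivity)
    nlinarith
  have t4 : 0 < cA (r / 3) * cB a b (r / 3) := by
    have h1 : cA (r / 3) = -(8 / 9 * r) := by
      unfold cA; linear_combination (1 / 27) * hr3
    have h2 : cB a b (r / 3) = -(16 / 9 * r) - (b * r / 3 - a) * (4 / 3) := by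
      unfold cB; linear_combination (2 / 27) * hr3 - (b * r / 3 - a) / 9 * hrr
    have h3 : (-b + r * a) < 4 := by
      apply lt_of_pow_lt_pow_left₀ 2 (by norm_num)
      nlinarith [sq_nonneg (a + r * b)]
    rw [h1, h2]
    have : 0 < (4 + b - r * a) * r := mul_pos (by linarith) hr0
    apply mul_pos_of_neg_of_neg
    · nlinarith
    · nlinarith
  obtain ⟨s1, hs1, hs1', t1⟩ : ∃ s, -2 < s ∧ s < -(r / 3) ∧ cA s * cB a b s < 0 := by
    have h : cB a b (-r) < 0 := by
      have : cB a b (-r) = 4 * (a + r * b) := by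
        unfold cB; linear_combination (-2) * hr3 + (b * r + a) * hrr
      linarith
    have e1 : ∀ᶠ s in 𝓝[>] (-r), cB a b s < 0 :=
      ((cB_cont a b).tendsto (-r)).eventually (gt_mem_nhds h) |>.filter_mono nhdsWithin_le_nhds
    have e2 : ∀ᶠ s in 𝓝[>] (-r), s ∈ Set.Ioo (-r) (-(r/3)) := Ioo_mem_nhdsGT (by linarith)
    obtain ⟨s, h1, h2, h3⟩ := (e1.and e2).exists
    refine ⟨s, by linarith, h3, mul_neg_of_pos_of_neg ?_ h1⟩
    have : cA s = (-s) * ((r - s) * (r + s)) := by unfold cA; linear_combination s * hrr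
    rw [this]
    exact mul_pos (by linarith) (mul_pos (by linarith) (by linarith))
  obtain ⟨s3, hs3, hs3', t3⟩ : ∃ s, -(r / 3) < s ∧ s < r / 3 ∧ cA s * cB a b s < 0 := by
    have h : 0 < cB a b 0 := by unfold cB; nlinarith
    have e1 : ∀ᶠ s in 𝓝[>] (0:ℝ), 0 < cB a b s :=
      ((cB_cont a b).tendsto 0).eventually (lt_mem_nhds h) |>.filter_mono nhdsWithin_le_nhds
    have e2 : ∀ᶠ s in 𝓝[>] (0:ℝ), s ∈ Set.Ioo 0 (r/3) := Ioo_mem_nhdsGT (by linarith)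
    obtain ⟨s, h1, h2, h3⟩ := (e1.and e2).exists
    refine ⟨s, by linarith, h3, mul_neg_of_neg_of_pos ?_ h1⟩
    have : cA s = -(s * ((r - s) * (r + s))) := by unfold cA; linear_combination s * hrr
    rw [this]
    exact neg_neg_of_pos (mul_pos (by linarith) (mul_pos (by linarith) (by linarith)))
  obtain ⟨s5, hs5, hs5', t5⟩ : ∃ s, r / 3 < s ∧ s < 2 ∧ cA s * cB a b s < 0 := by
    have h : 0 < cB a b r := by
      have : cB a b r = 4 * (a - r * b) := by
        unfold cB; linear_combination 2 * hr3 - (b * r - a) * hrr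
      nlinarith
    have e1 : ∀ᶠ s in 𝓝[<] r, 0 < cB a b s :=
      ((cB_cont a b).tendsto r).eventually (lt_mem_nhds h) |>.filter_mono nhdsWithin_le_nhds
    have e2 : ∀ᶠ s in 𝓝[<] r, s ∈ Set.Ioo (r/3) r := Ioo_mem_nhdsLT (by linarith)
    obtain ⟨s, h1, h2, h3⟩ := (e1.and e2).exists
    refine ⟨s, h2, by linarith, mul_neg_of_neg_of_pos ?_ h1⟩
    have : cA s = -(s * ((r - s) * (r + s))) := by unfold cA; linear_combination s * hrr
    rw [this]
    exact neg_neg_of_pos (mul_pos (by linarith) (mul_pos (by linarith) (by linarith)))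
  filter_upwards [ev_pos _ (cH a b (-2) ^ 2 * cG a b (-2)) t0,
    ev_neg _ (cH a b s1 ^ 2 * cG a b s1) t1,
    ev_pos _ (cH a b (-(r/3)) ^ 2 * cG a b (-(r/3))) t2,
    ev_neg _ (cH a b s3 ^ 2 * cG a b s3) t3,
    ev_pos _ (cH a b (r/3) ^ 2 * cG a b (r/3)) t4,
    ev_neg _ (cH a b s5 ^ 2 * cG a b s5) t5,
    ev_pos _ (cH a b 2 ^ 2 * cG a b 2) t6] with K k0 k1 k2 k3 k4 k5 k6
  have hc := cP_cont a b (1 / (2 * K ^ 2))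
  obtain ⟨R, hR, hmem⟩ := card_roots_le a b (1 / (2 * K ^ 2)) 2 (ne_of_gt k6)
  obtain ⟨z1, l1, u1, e1⟩ := ivt_root hc hs1 (mul_neg_of_pos_of_neg k0 k1)
  obtain ⟨z2, l2, u2, e2⟩ := ivt_root hc hs1' (mul_neg_of_neg_of_pos k1 k2)
  obtain ⟨z3, l3, u3, e3⟩ := ivt_root hc hs3 (mul_neg_of_pos_of_neg k2 k3)
  obtain ⟨z4, l4, u4, e4⟩ := ivt_root hc hs3' (mul_neg_of_neg_of_pos k3 k4)
  obtain ⟨z5, l5, u5, e5⟩ := ivt_root hc hs5 (mul_neg_of_pos_of_neg k4 k5)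
  obtain ⟨z6, l6, u6, e6⟩ := ivt_root hc hs5' (mul_neg_of_neg_of_pos k5 k6)
  refine ⟨R, le_antisymm hR ?_, hmem⟩
  have hsub : ({z1, z2, z3, z4, z5, z6} : Finset ℝ) ⊆ R := by
    intro s hs
    simp only [Finset.mem_insert, Finset.mem_singleton] at hs
    rw [hmem]
    rcases hs with rfl | rfl | rfl | rfl | rfl | rfl <;> assumption
  refine le_trans (le_of_eq ?_) (Finset.card_le_card hsub)
  have o1 : z1 < z2 := by linarith
  have o2 : z2 < z3 := by linarith
  have o3 : z3 < z4 := by linarith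
  have o4 : z4 < z5 := by linarith
  have o5 : z5 < z6 := by linarith
  rw [Finset.card_insert_of_notMem, Finset.card_insert_of_notMem, Finset.card_insert_of_notMem,
    Finset.card_insert_of_notMem, Finset.card_insert_of_notMem, Finset.card_singleton]
  all_goals
    simp only [Finset.mem_insert, Finset.mem_singleton, not_or]
    refine_lift ?_
    repeat' constructor
    all_goals (apply ne_of_lt; linarith)

/-- `N - G > 0` -/
lemma NG_pos (a b s : ℝ) (hr : a ^ 2 + b ^ 2 < 4) : 0 < s ^ 2 + 1 - cG a b s := by
  have h : 2 * a * s + b * (s ^ 2 - 1) < 2 * (s ^ 2 + 1) := by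
    apply lt_of_pow_lt_pow_left₀ 2 (by positivity)
    have : 0 < (s ^ 2 + 1) ^ 2 := by positivity
    nlinarith [sq_nonneg (a * (s ^ 2 - 1) - b * (2 * s))]
  unfold cG; linarith

lemma cH_ne (a b e s : ℝ) (ha : 0 < a) (hb : a ^ 2 < 3 * b ^ 2)
    (hr : a ^ 2 + b ^ 2 < 4) (hP : cP a b e s = 0) : cH a b s ≠ 0 := by
  intro hH
  have hN := NG_pos a b s hr
  have h1 : cA s * cB a b s = 0 := by
    unfold cP at hP; rw [hH] at hP; linarith
  have h2 : (s ^ 2 + 1) * cB a b s = cA s * (s ^ 2 + 1 - cG a b s) + cH a b s * (3 * s ^ 2 - 1) := by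
    unfold cB cA cG cH; ring
  have h3 : cA s = 0 := by
    have : cA s ^ 2 * (s ^ 2 + 1 - cG a b s) = 0 := by
      rw [hH] at h2; linear_combination (s ^ 2 + 1) * h1 - cA s * h2
    rcases mul_eq_zero.1 this with h | h
    · exact pow_eq_zero_iff (by norm_num) |>.1 h
    · exact absurd h hN.ne'
  have h4 : s * (s ^ 2 - 3) = 0 := by unfold cA at h3; linear_combination h3
  unfold cH at hH
  rcases mul_eq_zero.1 h4 with h | h
  · rw [h] at hH; linarith
  · have : a = b * s := by linear_combination hH / 2 - a / 2 * h
    have : a ^ 2 = 3 * b ^ 2 := by rw [this]; linear_combination b ^ 2 * h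
    linarith

lemma grad_eq (ρ χ K : ℝ) (x : EuclideanSpace ℝ (Fin 3)) :
    gradient (orientedPot ρ χ K) x = !₂[
      3 * (ρ * cos χ * x 1 * x 2 - 2 * K * x 0 * x 1 + (ρ * sin χ - 1) * x 0 * x 2),
      3 * (ρ * cos χ * x 0 * x 2 + K * (x 1 ^ 2 - x 0 ^ 2) - (ρ * sin χ + 1) * x 1 * x 2),
      3 * (ρ * cos χ * x 0 * x 1 + x 2 ^ 2 - x 1 ^ 2
        + (ρ * sin χ - 1) / 2 * (x 0 ^ 2 - x 1 ^ 2))] := by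
  apply HasGradientAt.gradient
  rw [hasGradientAt_iff_hasFDerivAt]
  have h : ∀ i : Fin 3, HasFDerivAt (fun y : EuclideanSpace ℝ (Fin 3) => y i)
      (EuclideanSpace.proj i : EuclideanSpace ℝ (Fin 3) →L[ℝ] ℝ) x :=
    fun i => (EuclideanSpace.proj i : EuclideanSpace ℝ (Fin 3) →L[ℝ] ℝ).hasFDerivAt
  have h0 := h 0
  have h1 := h 1
  have h2 := h 2
  have H := ((((h0.const_mul (3 * ρ * cos χ)).mul h1).mul h2).add
    (((((h1.pow 2).sub ((h0.pow 2).const_mul 3)).const_mul K).mul h1))).add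
    (((h2.pow 2).sub ((h1.pow 2).const_mul 3)).mul h2) |>.add
    ((((h0.pow 2).sub (h1.pow 2)).const_mul ((3 / 2) * (ρ * sin χ - 1))).mul h2)
  refine H.congr_fderiv ?_
  ext v
  simp [PiLp.inner_apply, Fin.sum_univ_three]
  ring


/-- Critical condition in terms of two scalar equations away from the poles. -/
lemma crit_iff (a b K x y z : ℝ) (hN : x ^ 2 + y ^ 2 ≠ 0) :
    (∃ c : ℝ, 3 * (a * y * z - 2 * K * x * y + (b - 1) * x * z) = c * x ∧
      3 * (a * x * z + K * (y ^ 2 - x ^ 2) - (b + 1) * y * z) = c * y ∧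
      3 * (a * x * y + z ^ 2 - y ^ 2 + (b - 1) / 2 * (x ^ 2 - y ^ 2)) = c * z) ↔
    (K * (x ^ 3 - 3 * x * y ^ 2) = z * (a * (x ^ 2 - y ^ 2) - 2 * b * x * y) ∧
      z * (z * (2 * a * x * y + b * (x ^ 2 - y ^ 2) - (x ^ 2 + y ^ 2)) - K * (3 * x ^ 2 * y - y ^ 3))
      = (x ^ 2 + y ^ 2) * (z ^ 2 + (2 * a * x * y + b * (x ^ 2 - y ^ 2) - (x ^ 2 + y ^ 2)) / 2)) := by
  constructor
  · rintro ⟨c, h1, h2, h3⟩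
    constructor
    · linear_combination y / 3 * h1 - x / 3 * h2
    · linear_combination z * x / 3 * h1 + z * y / 3 * h2 - (x ^ 2 + y ^ 2) / 3 * h3
  · rintro ⟨h1, h2⟩
    refine ⟨3 * (x * (a * y * z - 2 * K * x * y + (b - 1) * x * z) +
      y * (a * x * z + K * (y ^ 2 - x ^ 2) - (b + 1) * y * z)) / (x ^ 2 + y ^ 2), ?_, ?_, ?_⟩
    · field_simp
      linear_combination y * h1
    · field_simp
      linear_combination -x * h1
    · field_simp
      linear_combination -2 * h2

/-- Representative of the critical line with horizontal direction `(s, 1)`. -/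
noncomputable def cT (a b K s : ℝ) : ℝ := K * cA s / cH a b s

/-- The critical condition on coordinates. -/
def crit (a b K x y z : ℝ) : Prop :=
  ∃ c : ℝ, 3 * (a * y * z - 2 * K * x * y + (b - 1) * x * z) = c * x ∧
      3 * (a * x * z + K * (y ^ 2 - x ^ 2) - (b + 1) * y * z) = c * y ∧
      3 * (a * x * y + z ^ 2 - y ^ 2 + (b - 1) / 2 * (x ^ 2 - y ^ 2)) = c * z

lemma crit_smul (a b K x y z l : ℝ) (h : crit a b K x y z) :
    crit a b K (l * x) (l * y) (l * z) := by
  obtain ⟨c, h1, h2, h3⟩ := h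
  refine ⟨l * c, ?_, ?_, ?_⟩
  · linear_combination l ^ 2 * h1
  · linear_combination l ^ 2 * h2
  · linear_combination l ^ 2 * h3

lemma crit_one_iff (a b K s t : ℝ) (hK : 0 < K) (ha : 0 < a) (hb : a ^ 2 < 3 * b ^ 2)
    (hr : a ^ 2 + b ^ 2 < 4) :
    crit a b K s 1 t → cP a b (1 / (2 * K ^ 2)) s = 0 ∧ t = cT a b K s := by
  intro h
  have hN : s ^ 2 + 1 ≠ 0 := by positivity
  obtain ⟨h1, h2⟩ := (crit_iff a b K s 1 t (by simpa using hN)).1 h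
  have h1' : K * cA s = t * cH a b s := by unfold cA cH; linear_combination h1
  have hP : cP a b (1 / (2 * K ^ 2)) s = 0 := by
    have h3 : (s ^ 2 + 1) * cB a b s =
        cA s * (s ^ 2 + 1 - cG a b s) + cH a b s * (3 * s ^ 2 - 1) := by
      unfold cB cA cG cH; ring
    have h2' : t * (t * cG a b s - K * (3 * s ^ 2 - 1)) = (s ^ 2 + 1) * (t ^ 2 + cG a b s / 2) := by
      unfold cG; linear_combination h2
    have h4 : (s ^ 2 + 1) * (K ^ 2 * (cA s * cB a b s) + cH a b s ^ 2 * cG a b s / 2) = 0 := by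
      generalize cA s = A at *
      generalize cH a b s = H at *
      generalize cG a b s = G at *
      generalize cB a b s = B at *
      linear_combination K ^ 2 * A * h3 - H ^ 2 * h2' +
        ((s ^ 2 + 1 - G) * (K * A + t * H) + K * H * (3 * s ^ 2 - 1)) * h1'
    have h5 := (mul_eq_zero.1 h4).resolve_left hN
    unfold cP
    field_simp
    linear_combination 2 * h5
  refine ⟨hP, ?_⟩
  have hH := cH_ne a b _ s ha hb hr hP
  unfold cT
  rw [eq_div_iff hH, h1']

lemma crit_of_root (a b K s : ℝ) (hK : 0 < K) (ha : 0 < a) (hb : a ^ 2 < 3 * b ^ 2)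
    (hr : a ^ 2 + b ^ 2 < 4) (hP : cP a b (1 / (2 * K ^ 2)) s = 0) :
    crit a b K s 1 (cT a b K s) := by
  have hH := cH_ne a b _ s ha hb hr hP
  have hN : s ^ 2 + 1 ≠ 0 := by positivity
  have h1' : K * cA s = cT a b K s * cH a b s := by unfold cT; field_simp
  generalize cT a b K s = t at *
  apply (crit_iff a b K s 1 t (by simpa using hN)).2
  constructor
  · unfold cA cH at h1'; linear_combination h1'
  · have h3 : (s ^ 2 + 1) * cB a b s =
        cA s * (s ^ 2 + 1 - cG a b s) + cH a b s * (3 * s ^ 2 - 1) := by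
      unfold cB cA cG cH; ring
    have h5 : K ^ 2 * (cA s * cB a b s) + cH a b s ^ 2 * cG a b s / 2 = 0 := by
      unfold cP at hP
      field_simp at hP
      linear_combination hP / 2
    have h2' : t * (t * cG a b s - K * (3 * s ^ 2 - 1)) = (s ^ 2 + 1) * (t ^ 2 + cG a b s / 2) := by
      apply mul_left_cancel₀ (pow_ne_zero 2 hH)
      generalize cA s = A at *
      generalize cH a b s = H at *
      generalize cG a b s = G at *
      generalize cB a b s = B at *
      linear_combination K ^ 2 * A * h3 - (s ^ 2 + 1) * h5 +
        ((s ^ 2 + 1 - G) * (K * A + t * H) + K * H * (3 * s ^ 2 - 1)) * h1'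
    have h6 := h2'
    unfold cG at h6
    linear_combination (1 : ℝ) * h6

/-- No critical points on the great circle `y = 0` besides the poles. -/
lemma crit_y0 (a b K x z : ℝ) (hK : 0 < K) (ha : 0 < a)
    (hL : 0 < (2 - b) + 1 / (2 * K ^ 2) * (a ^ 2 * (b - 1))) (h : crit a b K x 0 z) : x = 0 := by
  by_contra hx
  obtain ⟨h1, h2⟩ := (crit_iff a b K x 0 z (by simpa using hx)).1 h
  have h1' : K * x = z * a := by
    apply mul_left_cancel₀ (pow_ne_zero 2 hx); linear_combination h1
  have h2' : z ^ 2 * (b - 2) = x ^ 2 * (b - 1) / 2 := by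
    apply mul_left_cancel₀ (pow_ne_zero 2 hx); linear_combination h2
  have h3 : x ^ 2 * (K ^ 2 * (2 - b) + a ^ 2 * (b - 1) / 2) = 0 := by
    linear_combination (K * x + z * a) * (2 - b) * h1' - a ^ 2 * h2'
  have h4 := (mul_eq_zero.1 h3).resolve_left (pow_ne_zero 2 hx)
  have h5 : (2 - b) + 1 / (2 * K ^ 2) * (a ^ 2 * (b - 1)) = 0 := by
    field_simp; linear_combination 2 * h4
  linarith

lemma crit_pole (a b K : ℝ) : crit a b K 0 0 1 := ⟨3, by ring, by ring, by ring⟩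

/-- The three coordinates of the chosen representative on each critical line. -/
noncomputable def repr3 (a b K : ℝ) : Option ℝ → ℝ × ℝ × ℝ
  | none => (0, 0, 1)
  | some s => (s, 1, cT a b K s)

/-- Its squared length -/
noncomputable def len2 (v : ℝ × ℝ × ℝ) : ℝ := v.1 ^ 2 + v.2.1 ^ 2 + v.2.2 ^ 2

noncomputable def ptOf (a b K : ℝ) (q : Option ℝ × Bool) : EuclideanSpace ℝ (Fin 3) :=
  let v := repr3 a b K q.1
  let l := (if q.2 then 1 else -1) / √(len2 v)
  !₂[l * v.1, l * v.2.1, l * v.2.2]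

lemma len2_pos (a b K : ℝ) (q : Option ℝ) : 0 < len2 (repr3 a b K q) := by
  cases q <;> simp only [len2, repr3] <;> positivity

lemma ptOf_inj (a b K : ℝ) : Function.Injective (ptOf a b K) := by
  rintro ⟨q, u⟩ ⟨q', u'⟩ h
  have e0 := congrArg (fun v : EuclideanSpace ℝ (Fin 3) => v 0) h
  have e1 := congrArg (fun v : EuclideanSpace ℝ (Fin 3) => v 1) h
  have e2 := congrArg (fun v : EuclideanSpace ℝ (Fin 3) => v 2) h
  have p := Real.sqrt_pos.2 (len2_pos a b K q)
  have p' := Real.sqrt_pos.2 (len2_pos a b K q')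
  simp only [ptOf] at e0 e1 e2
  generalize √(len2 (repr3 a b K q)) = m at *
  generalize √(len2 (repr3 a b K q')) = m' at *
  have hl : (if u then (1:ℝ) else -1) / m ≠ 0 := by
    apply div_ne_zero _ p.ne'; cases u <;> simp
  have hl' : (if u' then (1:ℝ) else -1) / m' ≠ 0 := by
    apply div_ne_zero _ p'.ne'; cases u' <;> simp
  have hu : (if u then (1:ℝ) else -1) / m = (if u' then (1:ℝ) else -1) / m' → u = u' := by
    intro h
    have hm : 0 < m⁻¹ := by positivity
    have hm' : 0 < m'⁻¹ := by positivity
    cases u <;> cases u' <;> simp [neg_div] at h ⊢ <;> linarith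
  generalize (if u then (1:ℝ) else -1) / m = l at *
  generalize (if u' then (1:ℝ) else -1) / m' = l' at *
  rcases q with _ | s <;> rcases q' with _ | s'
  · simp [repr3] at e2
    rw [hu e2]
  · simp [repr3] at e1
    exact absurd e1.symm hl'
  · simp [repr3] at e1
    exact absurd e1 hl
  · simp [repr3] at e0 e1
    rw [hu e1]
    rw [← e1] at e0
    rw [mul_left_cancel₀ hl e0]

lemma encard_main (ρ χ K : ℝ) (hK : 0 < K) (ha : 0 < ρ * cos χ)
    (hb : (ρ * cos χ) ^ 2 < 3 * (ρ * sin χ) ^ 2)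
    (hr : (ρ * cos χ) ^ 2 + (ρ * sin χ) ^ 2 < 4)
    (hL : 0 < (2 - ρ * sin χ) + 1 / (2 * K ^ 2) * ((ρ * cos χ) ^ 2 * (ρ * sin χ - 1)))
    (R : Finset ℝ) (hR : R.card = 6)
    (hmem : ∀ s, s ∈ R ↔ cP (ρ * cos χ) (ρ * sin χ) (1 / (2 * K ^ 2)) s = 0) :
    {x : EuclideanSpace ℝ (Fin 3) |
        (x 0) ^ 2 + (x 1) ^ 2 + (x 2) ^ 2 = 1 ∧
        ∃ c : ℝ, gradient (orientedPot ρ χ K) x = c • x}.encard = 14 := by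
  have hcrit : ∀ x : EuclideanSpace ℝ (Fin 3),
      (∃ c : ℝ, gradient (orientedPot ρ χ K) x = c • x) ↔
        crit (ρ * cos χ) (ρ * sin χ) K (x 0) (x 1) (x 2) := by
    intro x
    unfold crit
    refine exists_congr fun c => ?_
    rw [grad_eq]
    constructor
    · intro h
      refine ⟨?_, ?_, ?_⟩
      · simpa using congrArg (fun v : EuclideanSpace ℝ (Fin 3) => v 0) h
      · simpa using congrArg (fun v : EuclideanSpace ℝ (Fin 3) => v 1) h
      · simpa using congrArg (fun v : EuclideanSpace ℝ (Fin 3) => v 2) h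
    · rintro ⟨h0, h1, h2⟩
      ext i
      fin_cases i
      · simpa using h0
      · simpa using h1
      · simpa using h2
  generalize hA : ρ * cos χ = a at *
  generalize hB : ρ * sin χ = b at *
  have hset : {x : EuclideanSpace ℝ (Fin 3) |
        (x 0) ^ 2 + (x 1) ^ 2 + (x 2) ^ 2 = 1 ∧
        ∃ c : ℝ, gradient (orientedPot ρ χ K) x = c • x} =
      Set.image (ptOf a b K) ((R.insertNone ×ˢ (Finset.univ : Finset Bool) : Finset (Option ℝ × Bool)) :
        Set (Option ℝ × Bool)) := by
    ext x
    rw [Set.mem_ofPred_eq, hcrit]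
    constructor
    · rintro ⟨hn, hc⟩
      -- the vector is a multiple of a representative
      obtain ⟨q, hq, l, h0, h1, h2⟩ : ∃ q ∈ R.insertNone, ∃ l : ℝ,
          x 0 = l * (repr3 a b K q).1 ∧ x 1 = l * (repr3 a b K q).2.1 ∧
          x 2 = l * (repr3 a b K q).2.2 := by
        by_cases hy : x 1 = 0
        · refine ⟨none, by simp, x 2, ?_, ?_, ?_⟩
          · rw [hy] at hc
            simpa [repr3] using crit_y0 a b K _ _ hK ha hL hc
          · simpa [repr3] using hy
          · simp [repr3]
        · have hc' := crit_smul _ _ _ _ _ _ (1 / x 1) hc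
          rw [one_div_mul_cancel hy] at hc'
          obtain ⟨hP, ht⟩ := crit_one_iff a b K _ _ hK ha hb hr hc'
          refine ⟨some (1 / x 1 * x 0), ?_, x 1, ?_, ?_, ?_⟩
          · rw [Finset.some_mem_insertNone, hmem]; exact hP
          · simp only [repr3]; field_simp
          · simp [repr3]
          · simp only [repr3]; rw [← ht]; field_simp
      have hlen := len2_pos a b K q
      have hsq : √(len2 (repr3 a b K q)) ^ 2 = len2 (repr3 a b K q) := Real.sq_sqrt hlen.le
      have hsp := Real.sqrt_pos.2 hlen
      have hl : (l * √(len2 (repr3 a b K q))) ^ 2 = 1 := by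
        rw [mul_pow, hsq, ← hn, h0, h1, h2]; unfold len2; ring
      have : ∃ u : Bool, l = (if u then 1 else -1) / √(len2 (repr3 a b K q)) := by
        rcases (sq_eq_sq_iff_eq_or_eq_neg.1 (hl.trans (one_pow 2).symm)) with h | h
        · exact ⟨true, by rw [eq_div_iff hsp.ne']; simpa using h⟩
        · exact ⟨false, by rw [eq_div_iff hsp.ne']; simpa using h⟩
      obtain ⟨u, hu⟩ := this
      refine ⟨(q, u), by simpa using hq, ?_⟩
      ext i
      simp only [ptOf]
      rw [← hu]
      fin_cases i
      · simpa using h0.symm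
      · simpa using h1.symm
      · simpa using h2.symm
    · rintro ⟨⟨q, u⟩, hq, rfl⟩
      have hlen := len2_pos a b K q
      have hsq : √(len2 (repr3 a b K q)) ^ 2 = len2 (repr3 a b K q) := Real.sq_sqrt hlen.le
      have hsp := Real.sqrt_pos.2 hlen
      have hq' : q ∈ R.insertNone := by simpa using hq
      constructor
      · have hu : (if u then (1:ℝ) else -1) ^ 2 = 1 := by cases u <;> simp
        simp [ptOf]
        simp only [mul_pow, div_pow, hsq, hu]
        field_simp
        simp [len2]
      · simp only [ptOf]
        apply crit_smul
        rcases q with _ | s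
        · exact crit_pole a b K
        · rw [Finset.some_mem_insertNone, hmem] at hq'
          exact crit_of_root a b K s hK ha hb hr hq'
  rw [hset, (ptOf_inj a b K).encard_image, Set.encard_coe_eq_coe_finsetCard, Finset.card_product,
    Finset.card_insertNone, hR]
  norm_num

end Helpers

theorem stmt14 (ρ χ : ℝ) (hρ : 0 < ρ) (hρ2 : ρ < 2)
    (hχ1 : -(π / 2) < χ) (hχ2 : χ < -(π / 6)) :
    ∃ K₀ > (0 : ℝ), ∀ K > K₀,
      {x : EuclideanSpace ℝ (Fin 3) |
        (x 0) ^ 2 + (x 1) ^ 2 + (x 2) ^ 2 = 1 ∧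
        ∃ c : ℝ, gradient (orientedPot ρ χ K) x = c • x}.encard = 14 := by
  have hπ := Real.pi_pos
  have hcos : 0 < cos χ := Real.cos_pos_of_mem_Ioo ⟨by linarith, by linarith⟩
  have hsin : sin χ < 0 := Real.sin_neg_of_neg_of_neg_pi_lt (by linarith) (by linarith)
  have hadd : cos χ + √3 * sin χ < 0 := by
    have h : sin (χ + π / 6) < 0 :=
      Real.sin_neg_of_neg_of_neg_pi_lt (by linarith) (by linarith)
    rw [Real.sin_add, Real.cos_pi_div_six, Real.sin_pi_div_six] at h
    linarith
  have h3 : √3 ^ 2 = 3 := by norm_num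
  have ha : 0 < ρ * cos χ := mul_pos hρ hcos
  have hb : ρ * sin χ < 0 := mul_neg_of_pos_of_neg hρ hsin
  have hab : ρ * cos χ + √3 * (ρ * sin χ) < 0 := by
    have := mul_neg_of_pos_of_neg hρ hadd
    linarith
  have hb2 : (ρ * cos χ) ^ 2 < 3 * (ρ * sin χ) ^ 2 := by
    have : (ρ * cos χ) ^ 2 < (-(√3 * (ρ * sin χ))) ^ 2 :=
      pow_lt_pow_left₀ (by linarith) ha.le (by norm_num)
    rw [neg_sq, mul_pow √3, h3] at this
    exact this
  have hr : (ρ * cos χ) ^ 2 + (ρ * sin χ) ^ 2 < 4 := by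
    have : (ρ * cos χ) ^ 2 + (ρ * sin χ) ^ 2 = ρ ^ 2 := by
      linear_combination ρ ^ 2 * Real.sin_sq_add_cos_sq χ
    nlinarith
  have E := (ev_roots _ _ ha hb hab hr).and
    (ev_pos (2 - ρ * sin χ) ((ρ * cos χ) ^ 2 * (ρ * sin χ - 1)) (by linarith))
  obtain ⟨K₁, hK₁⟩ := Filter.eventually_atTop.1 E
  refine ⟨max K₁ 1, by positivity, fun K hK => ?_⟩
  have k1 : K₁ ≤ K := (le_max_left _ _).trans hK.le
  have k2 : 0 < K := lt_of_lt_of_le one_pos ((le_max_right _ _).trans hK.le)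
  obtain ⟨⟨R, hR, hmem⟩, hL⟩ := hK₁ K k1
  exact encard_main ρ χ K k2 ha hb2 hr hL R hR hmem
end
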